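/- Define ᾱ_1 = 1 and ᾱ_{k+1} = 2/(1 + √(1 + 4/ᾱ_k²)) for k ≥ 1. Let a > 0 and 0 < b < 1 be reals satisfying a(1−b)·2^{2−b} − a·b(1−b)·2^{−b} − 1 ≥ 0. Then for every integer k ≥ 1, 2/((1 + a·k^{−b})·k + 1) < ᾱ_k ≤ 2/(k + 1). -/

import Mathlib

/-!
With `t k = 2 / alphaBar k` the recursion reads `t (k+1) = 1 + √(1 + t k ^ 2)`, and the claim becomes
`k + 1 ≤ t k < k + 1 + a * k ^ (1 - b)`. The lower bound is immediate by induction.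
For the upper bound, put `x = k + 1`, `X = x ^ (1 - b)`, `Y = k ^ (1 - b)`: the inductive step needs
`1 + (x + a * Y) ^ 2 ≤ (x + a * X) ^ 2`. Bernoulli's inequality gives `x * (X - Y) ≥ (1 - b) * X`
(`rpow_sub_rpow_bound`), so the difference of the squares is at least `2 * a * (1 - b) * X`, which is
at least `1` by the hypothesis on `a, b`, because `X ≥ 2 ^ (1 - b)` (`step_bound`).
-/

/-- The damping sequence `ᾱ_1 = 1`, `ᾱ_{k+1} = 2/(1 + √(1 + 4/ᾱ_k²))`. -/
noncomputable def alphaBar : ℕ → ℝ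
  | 0 => 1
  | 1 => 1
  | (k + 2) => 2 / (1 + Real.sqrt (1 + 4 / (alphaBar (k + 1)) ^ 2))

lemma alphaBar_pos : ∀ k : ℕ, 0 < alphaBar k
  | 0 => by simp [alphaBar]
  | 1 => by simp [alphaBar]
  | (k + 2) => by rw [alphaBar]; positivity

lemma two_div_alphaBar_succ (k : ℕ) (hk : 1 ≤ k) :
    2 / alphaBar (k + 1) = 1 + Real.sqrt (1 + (2 / alphaBar k) ^ 2) := by
  obtain ⟨m, rfl⟩ : ∃ m, k = m + 1 := ⟨k - 1, by omega⟩
  rw [show m + 1 + 1 = m + 2 from rfl, alphaBar, div_div_cancel₀ (by norm_num), div_pow]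
  norm_num

/-- A concavity bound for `y ↦ y ^ s`: Bernoulli's inequality for `(1 - 1 / (y + 1)) ^ s`. -/
lemma rpow_sub_rpow_bound (s y : ℝ) (hs0 : 0 ≤ s) (hs1 : s ≤ 1) (hy : 0 < y) :
    s * (y + 1) ^ s ≤ (y + 1) * ((y + 1) ^ s - y ^ s) := by
  have hx : 0 < y + 1 := by linarith
  have hB : (1 + -(1 / (y + 1))) ^ s ≤ 1 + s * -(1 / (y + 1)) := by
    apply rpow_one_add_le_one_add_mul_self _ hs0 hs1
    rw [neg_le_neg_iff, div_le_one hx]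
    linarith
  have hbase : 1 + -(1 / (y + 1)) = y / (y + 1) := by field_simp; ring
  rw [hbase, Real.div_rpow hy.le hx.le, div_le_iff₀ (by positivity)] at hB
  have h2 := mul_le_mul_of_nonneg_left hB hx.le
  have h3 : (y + 1) * ((1 + s * -(1 / (y + 1))) * (y + 1) ^ s)
      = (y + 1) * (y + 1) ^ s - s * (y + 1) ^ s := by field_simp; ring
  linarith

lemma step_bound (a b y : ℝ) (ha : 0 < a) (hb0 : 0 < b) (hb1 : b < 1)
    (hcond : a * (1 - b) * (2 : ℝ) ^ (2 - b) - a * b * (1 - b) * (2 : ℝ) ^ (-b) - 1 ≥ 0)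
    (hy : 1 ≤ y) :
    1 + (y + 1 + a * y ^ (1 - b)) ^ 2 ≤ (y + 1 + a * (y + 1) ^ (1 - b)) ^ 2 := by
  have hB := rpow_sub_rpow_bound (1 - b) y (by linarith) (by linarith) (by linarith)
  have hX : (2 : ℝ) ^ (1 - b) ≤ (y + 1) ^ (1 - b) :=
    Real.rpow_le_rpow (by norm_num) (by linarith) (by linarith)
  have hXY : y ^ (1 - b) ≤ (y + 1) ^ (1 - b) :=
    Real.rpow_le_rpow (by linarith) (by linarith) (by linarith)
  have hY : 0 ≤ y ^ (1 - b) := Real.rpow_nonneg (by linarith) _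
  have h2 : (2 : ℝ) ^ (2 - b) = 2 * 2 ^ (1 - b) := by
    rw [show 2 - b = 1 + (1 - b) by ring, Real.rpow_add (by norm_num), Real.rpow_one]
  have hs : 0 < 1 - b := by linarith
  have hdrop : 0 ≤ a * b * (1 - b) * (2 : ℝ) ^ (-b) := by positivity
  rw [h2] at hcond
  generalize (y + 1) ^ (1 - b) = X at *
  generalize y ^ (1 - b) = Y at *
  have h4 : a * (1 - b) * (2 * 2 ^ (1 - b)) ≤ a * (1 - b) * (2 * X) := by gcongr
  have h5 := mul_le_mul_of_nonneg_left hB ha.le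
  have h6 : 0 ≤ (a * (X - Y)) * (a * (X + Y)) :=
    mul_nonneg (mul_nonneg ha.le (by linarith)) (mul_nonneg ha.le (by linarith))
  linarith

/-- The two-sided bound in terms of `2 / alphaBar k`. -/
lemma two_div_alphaBar_bounds (a b : ℝ) (ha : 0 < a) (hb0 : 0 < b) (hb1 : b < 1)
    (hcond : a * (1 - b) * (2 : ℝ) ^ (2 - b) - a * b * (1 - b) * (2 : ℝ) ^ (-b) - 1 ≥ 0)
    (k : ℕ) (hk : 1 ≤ k) :
    (k : ℝ) + 1 ≤ 2 / alphaBar k ∧ 2 / alphaBar k < k + 1 + a * (k : ℝ) ^ (1 - b) := by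
  induction k, hk using Nat.le_induction with
  | base => constructor <;> norm_num [alphaBar, ha]
  | succ k hk ih =>
    obtain ⟨hl, hu⟩ := ih
    have hk' : (1 : ℝ) ≤ k := by exact_mod_cast hk
    rw [two_div_alphaBar_succ k hk]
    push_cast
    generalize 2 / alphaBar k = t at *
    constructor
    · have : (k : ℝ) + 1 ≤ Real.sqrt (1 + t ^ 2) := Real.le_sqrt_of_sq_le (by nlinarith)
      linarith
    · have hstep := step_bound a b k ha hb0 hb1 hcond hk'
      have hX : 0 ≤ a * ((k : ℝ) + 1) ^ (1 - b) := by positivity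
      have : Real.sqrt (1 + t ^ 2) < k + 1 + a * ((k : ℝ) + 1) ^ (1 - b) := by
        rw [Real.sqrt_lt' (by linarith)]
        have : t ^ 2 < (k + 1 + a * (k : ℝ) ^ (1 - b)) ^ 2 := by
          apply pow_lt_pow_left₀ hu (by linarith) (by norm_num)
        linarith
      linarith

theorem stmt3 (a b : ℝ) (ha : 0 < a) (hb0 : 0 < b) (hb1 : b < 1)
    (hcond : a * (1 - b) * (2 : ℝ) ^ (2 - b) - a * b * (1 - b) * (2 : ℝ) ^ (-b) - 1 ≥ 0) :
    ∀ k : ℕ, 1 ≤ k →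
      2 / ((1 + a * (k : ℝ) ^ (-b)) * k + 1) < alphaBar k ∧
      alphaBar k ≤ 2 / ((k : ℝ) + 1) := by
  intro k hk
  obtain ⟨hl, hu⟩ := two_div_alphaBar_bounds a b ha hb0 hb1 hcond k hk
  have hk' : (0 : ℝ) < k := by exact_mod_cast hk
  have hpos := alphaBar_pos k
  have hpow : (k : ℝ) ^ (1 - b) = (k : ℝ) ^ (-b) * k := by
    rw [show 1 - b = -b + 1 by ring, Real.rpow_add hk', Real.rpow_one]
  rw [hpow, div_lt_iff₀ hpos] at hu
  rw [le_div_iff₀ hpos] at hl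
  constructor
  · rw [div_lt_iff₀ (by positivity)]
    linarith
  · rw [le_div_iff₀ (by positivity)]
    linarith
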